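/- Let λ1>0, λ2≥0, λ3≥0 and let f be the joint mass function of the bivariate Pseudo-Poisson distribution. Then the cross moment satisfies ∑_{x1=0}^∞ ∑_{x2=0}^∞ x1·x2 · f(x1,x2) = λ2·λ1 + λ3·(λ1 + λ1²). -/

import Mathlib

/-!
Conditionally on `X1 = x1`, the variable `X2` is Poisson with mean `l2 + l3 * x1`, so the inner sum
is `x1 * (l2 + l3 * x1)` times the Poisson weight of `x1`. The outer sum is then
`E[X1 * (l2 + l3 * X1)]` for `X1` Poisson with mean `l1`. Both sums follow from the identity
`E[X * g X] = r * E[g (X + 1)]` for a Poisson variable `X` of mean `r`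
(`hasSum_mul_poissonWeight`), which comes from `n / n! = 1 / (n - 1)!`.
-/

/-- The joint mass function of the bivariate Pseudo-Poisson distribution
with parameters `λ1, λ2, λ3` (with linear regression). -/
noncomputable def pseudoPoissonPMF (l1 l2 l3 : ℝ) (x1 x2 : ℕ) : ℝ :=
  (Real.exp (-l1) * l1 ^ x1 / (Nat.factorial x1)) *
    (Real.exp (-(l2 + l3 * x1)) * (l2 + l3 * x1) ^ x2 / (Nat.factorial x2))

/-- The Poisson weight `e^{-r} r^n / n!`, for an arbitrary real parameter `r`. -/
noncomputable def poissonWeight (r : ℝ) (n : ℕ) : ℝ :=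
  Real.exp (-r) * r ^ n / (Nat.factorial n)

lemma hasSum_poissonWeight (r : ℝ) : HasSum (poissonWeight r) 1 := by
  have h := (NormedSpace.expSeries_div_hasSum_exp (𝔸 := ℝ) r).mul_left (Real.exp (-r))
  rw [← Real.exp_eq_exp_ℝ, ← Real.exp_add, neg_add_cancel, Real.exp_zero] at h
  refine h.congr_fun fun n => ?_
  simp only [poissonWeight, mul_div_assoc]

/-- The Stein–Chen identity `E[X * g X] = r * E[g (X + 1)]` for a Poisson variable `X` of
parameter `r`. -/
lemma hasSum_mul_poissonWeight {r s : ℝ} {g : ℕ → ℝ}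
    (h : HasSum (fun n => g (n + 1) * poissonWeight r n) s) :
    HasSum (fun n : ℕ => (n : ℝ) * g n * poissonWeight r n) (r * s) := by
  rw [← hasSum_nat_add_iff' 1]
  simp only [Finset.sum_range_one, Nat.cast_zero, zero_mul, sub_zero]
  refine (h.mul_left r).congr_fun fun n => ?_
  have hn : (Nat.factorial n : ℝ) ≠ 0 := by positivity
  have hn1 : (n : ℝ) + 1 ≠ 0 := by positivity
  simp only [poissonWeight, Nat.factorial_succ]
  push_cast
  field_simp
  ring

lemma hasSum_poissonWeight_mean (r : ℝ) :
    HasSum (fun n : ℕ => (n : ℝ) * poissonWeight r n) r := by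
  have h := hasSum_mul_poissonWeight (r := r) (s := 1) (g := fun _ => 1)
    (by simpa using hasSum_poissonWeight r)
  rw [mul_one] at h
  simpa using h

/-- The cross moment of the bivariate Pseudo-Poisson distribution is
`E(X1·X2) = λ2·λ1 + λ3·(λ1 + λ1²)`. -/
theorem pseudoPoisson_cross_moment (l1 l2 l3 : ℝ) (h1 : 0 < l1) (h2 : 0 ≤ l2) (h3 : 0 ≤ l3) :
    ∑' x1 : ℕ, ∑' x2 : ℕ, (x1 : ℝ) * (x2 : ℝ) * pseudoPoissonPMF l1 l2 l3 x1 x2 =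
      l2 * l1 + l3 * (l1 + l1 ^ 2) := by
  have inner (x1 : ℕ) :
      ∑' x2 : ℕ, (x1 : ℝ) * (x2 : ℝ) * pseudoPoissonPMF l1 l2 l3 x1 x2 =
        (x1 : ℝ) * (l2 + l3 * x1) * poissonWeight l1 x1 := by
    have h := (hasSum_poissonWeight_mean (l2 + l3 * x1)).mul_left ((x1 : ℝ) * poissonWeight l1 x1)
    rw [mul_right_comm, ← h.tsum_eq]
    refine tsum_congr fun x2 => ?_
    simp only [pseudoPoissonPMF, poissonWeight]
    ring
  have shifted : HasSum (fun n : ℕ => (l2 + l3 * ((n + 1 : ℕ) : ℝ)) * poissonWeight l1 n)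
      ((l2 + l3) * 1 + l3 * l1) := by
    refine (((hasSum_poissonWeight l1).mul_left (l2 + l3)).add
      ((hasSum_poissonWeight_mean l1).mul_left l3)).congr_fun fun n => ?_
    push_cast
    ring
  simp only [inner]
  rw [(hasSum_mul_poissonWeight (g := fun n => l2 + l3 * (n : ℝ)) shifted).tsum_eq]
  ring
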